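/- Let the setting be type A_N or type B_N, let (i_t,k_t), 1 ≤ t ≤ T, be a snake, let (p_1,…,p_T) ∈ P̄_{(i_t,k_t)}, and set m = ∏_{t=1}^T m(p_t). Let (i,k) ∈ W. If m·A_{i,k}⁻¹ is not equal to ∏_{t=1}^T m(p′_t) for any (p′_1,…,p′_T) ∈ P̄_{(i_t,k_t)}, then for every (j,ℓ) ∈ W with (j,ℓ) ≠ (i,k), the monomial m·A_{i,k}⁻¹·A_{j,ℓ} is also not equal to ∏_{t=1}^T m(p′_t) for any (p′_1,…,p′_T) ∈ P̄_{(i_t,k_t)}. -/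

import Mathlib

namespace Paper

/-- The ambient setting: type `A N` (with `N ≥ 1`) or type `B N ε`
(with `N ≥ 2` and `0 < ε < 1/2`). -/
inductive Setting where
  | A (N : ℕ)
  | B (N : ℕ) (ε : ℝ)

namespace Setting

/-- The rank `N`. -/
def N : Setting → ℕ
  | A n => n
  | B n _ => n

/-- Validity of the parameters of the setting. -/
def valid : Setting → Prop
  | A n => 1 ≤ n
  | B n ε => 2 ≤ n ∧ 0 < ε ∧ ε < 1 / 2

end Setting

/-- The numbers `r_i` : in type A all equal `1`; in type B, `r_N = 1` and `r_i = 2` for `i < N`. -/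
def rr : Setting → ℕ → ℕ
  | .A _, _ => 1
  | .B n _, j => if j = n then 1 else 2

/-- The set `X` in type `A_N`. -/
def XA (n : ℕ) : Set (ℕ × ℤ) :=
  {ik | 1 ≤ ik.1 ∧ ik.1 ≤ n ∧ ((ik.1 : ℤ) - ik.2) % 2 = 1}

/-- The set `X` in type `B_N`. -/
def XB (n : ℕ) : Set (ℕ × ℤ) :=
  {ik | (ik.1 = n ∧ ik.2 % 2 = 1) ∨ (1 ≤ ik.1 ∧ ik.1 < n ∧ ik.2 % 2 = 0)}

/-- The set `X ⊆ I × ℤ`. -/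
def X : Setting → Set (ℕ × ℤ)
  | .A n => XA n
  | .B n _ => XB n

/-- The set `W = {(i,k) : (i, k - r_i) ∈ X}`. -/
def W (S : Setting) : Set (ℕ × ℤ) :=
  {ik | (ik.1, ik.2 - (rr S ik.1 : ℤ)) ∈ X S}

/-- The `r`-th point of a path (a finite list of points of the plane). -/
def pt (p : List (ℝ × ℝ)) (r : ℕ) : ℝ × ℝ := p.getD r (0, 0)

/-- The set of paths `𝒫_{i,k}` in type `A_N`. -/
def pathsA (n : ℕ) (i : ℕ) (k : ℤ) : Set (List (ℝ × ℝ)) :=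
  {p | p.length = n + 2 ∧
    (∀ r, r < n + 2 → (pt p r).1 = (r : ℝ)) ∧
    (pt p 0).2 = (i : ℝ) + (k : ℝ) ∧
    (pt p (n + 1)).2 = (n : ℝ) + 1 - (i : ℝ) + (k : ℝ) ∧
    (∀ r, r ≤ n → (pt p (r + 1)).2 - (pt p r).2 = 1 ∨ (pt p (r + 1)).2 - (pt p r).2 = -1)}

/-- The set of paths `𝒫_{N,ℓ}` in type `B_N`. -/
def pathsBspin (n : ℕ) (ε : ℝ) (l : ℤ) : Set (List (ℝ × ℝ)) :=
  {p | p.length = n + 1 ∧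
    (if l % 4 = 3 then ∀ r, r < n → (pt p r).1 = 2 * (r : ℝ)
     else ∀ r, r < n → (pt p r).1 = 4 * (n : ℝ) - 2 - 2 * (r : ℝ)) ∧
    (pt p n).1 = 2 * (n : ℝ) - 1 ∧
    (pt p 0).2 = (l : ℝ) + 2 * (n : ℝ) - 1 ∧
    (∀ r, r + 2 ≤ n → (pt p (r + 1)).2 - (pt p r).2 = 2 ∨ (pt p (r + 1)).2 - (pt p r).2 = -2) ∧
    ((pt p n).2 - (pt p (n - 1)).2 = 1 + ε ∨ (pt p n).2 - (pt p (n - 1)).2 = -(1 + ε))}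

/-- The set of paths `𝒫_{i,k}` in type `B_N`. -/
def pathsB (n : ℕ) (ε : ℝ) (i : ℕ) (k : ℤ) : Set (List (ℝ × ℝ)) :=
  if i = n then pathsBspin n ε k
  else {p | ∃ a b : List (ℝ × ℝ),
    a ∈ pathsBspin n ε (k - (2 * (n : ℤ) - 2 * (i : ℤ) - 1)) ∧
    b ∈ pathsBspin n ε (k + (2 * (n : ℤ) - 2 * (i : ℤ) - 1)) ∧
    p = a ++ b.reverse ∧
    (pt a n).1 = (pt b n).1 ∧ 0 < (pt a n).2 - (pt b n).2}

/-- The set of paths `𝒫_{i,k}`. -/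
def P : Setting → ℕ → ℤ → Set (List (ℝ × ℝ))
  | .A n => pathsA n
  | .B n ε => pathsB n ε

/-- The map `ι : X → ℤ × ℤ` of type `B_N`. -/
def iotaB (n : ℕ) (ik : ℕ × ℤ) : ℤ × ℤ :=
  if ik.1 = n then (2 * (n : ℤ) - 1, ik.2)
  else if (2 * (n : ℤ) + ik.2 - 2 * (ik.1 : ℤ)) % 4 = 2 then (2 * (ik.1 : ℤ), ik.2)
  else (4 * (n : ℤ) - 2 - 2 * (ik.1 : ℤ), ik.2)

/-- The corners of a path: `Cp S p true` is the set `C_{p,+}` of upper corners, and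
`Cp S p false` is the set `C_{p,-}` of lower corners. -/
def Cp (S : Setting) (p : List (ℝ × ℝ)) (up : Bool) : Set (ℕ × ℤ) :=
  match S with
  | .A n =>
    {jl | 1 ≤ jl.1 ∧ jl.1 ≤ n ∧
      pt p jl.1 = ((jl.1 : ℝ), (jl.2 : ℝ)) ∧
      (pt p (jl.1 - 1)).2 = (jl.2 : ℝ) + (if up then 1 else -1) ∧
      (pt p (jl.1 + 1)).2 = (jl.2 : ℝ) + (if up then 1 else -1)}
  | .B n ε =>
    {jl | jl ∈ XB n ∧
      ((∃ r : ℕ, 1 ≤ r ∧ r + 1 < p.length ∧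
          pt p r = (((iotaB n jl).1 : ℝ), ((iotaB n jl).2 : ℝ)) ∧
          (iotaB n jl).1 ≠ 0 ∧ (iotaB n jl).1 ≠ 2 * (n : ℤ) - 1 ∧
          (iotaB n jl).1 ≠ 4 * (n : ℤ) - 2 ∧
          (if up then (pt p r).2 < (pt p (r - 1)).2 ∧ (pt p r).2 < (pt p (r + 1)).2
           else (pt p (r - 1)).2 < (pt p r).2 ∧ (pt p (r + 1)).2 < (pt p r).2))
       ∨ (jl.1 = n ∧
          (if up then (2 * (n : ℝ) - 1, (jl.2 : ℝ) - ε) ∈ p ∧ (2 * (n : ℝ) - 1, (jl.2 : ℝ) + ε) ∉ p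
           else (2 * (n : ℝ) - 1, (jl.2 : ℝ) + ε) ∈ p ∧ (2 * (n : ℝ) - 1, (jl.2 : ℝ) - ε) ∉ p)))}

/-- `p'` is obtained from `p` by replacing the point `q` by the point `q'`. -/
def Replace1 (p p' : List (ℝ × ℝ)) (q q' : ℝ × ℝ) : Prop :=
  ∃ r : ℕ, r < p.length ∧ pt p r = q ∧ p'.length = p.length ∧ pt p' r = q' ∧
    ∀ s, s < p.length → s ≠ r → pt p' s = pt p s

/-- `p'` is obtained from `p` by replacing the point `q1` by `q1'` and the point `q2` by `q2'`. -/
def Replace2 (p p' : List (ℝ × ℝ)) (q1 q1' q2 q2' : ℝ × ℝ) : Prop :=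
  ∃ r s : ℕ, r < p.length ∧ s < p.length ∧ r ≠ s ∧ pt p r = q1 ∧ pt p s = q2 ∧
    p'.length = p.length ∧ pt p' r = q1' ∧ pt p' s = q2' ∧
    ∀ u, u < p.length → u ≠ r → u ≠ s → pt p' u = pt p u

/-- The path `p` can be lowered at `(j, l)`: `(j, l - r_j) ∈ C_{p,+}` and
`(j, l + r_j) ∉ C_{p,+}`. -/
def CanLower (S : Setting) (p : List (ℝ × ℝ)) (j : ℕ) (l : ℤ) : Prop :=
  (j, l - (rr S j : ℤ)) ∈ Cp S p true ∧ (j, l + (rr S j : ℤ)) ∉ Cp S p true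

/-- `p'` is the result of the lowering move at `(j,l)` applied to the path `p ∈ 𝒫_{i,k}`;
written `p' = p 𝒜_{j,l}⁻¹`. -/
def LoweredTo (S : Setting) (i : ℕ) (k : ℤ) (j : ℕ) (l : ℤ)
    (p p' : List (ℝ × ℝ)) : Prop :=
  p ∈ P S i k ∧ p' ∈ P S i k ∧ CanLower S p j l ∧
  (match S with
   | .A _ => Replace1 p p' ((j : ℝ), (l : ℝ) - 1) ((j : ℝ), (l : ℝ) + 1)
   | .B n ε =>
     if j = n then
       Replace1 p p' (2 * (n : ℝ) - 1, (l : ℝ) - 1 - ε) (2 * (n : ℝ) - 1, (l : ℝ) + 1 + ε)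
     else if j = n - 1 then
       Replace2 p p'
         (((iotaB n (j, l - 2)).1 : ℝ), (l : ℝ) - 2) (((iotaB n (j, l - 2)).1 : ℝ), (l : ℝ) + 2)
         (2 * (n : ℝ) - 1, (l : ℝ) - 1 + ε) (2 * (n : ℝ) - 1, (l : ℝ) + 1 - ε)
     else
       Replace1 p p'
         (((iotaB n (j, l - 2)).1 : ℝ), (l : ℝ) - 2) (((iotaB n (j, l - 2)).1 : ℝ), (l : ℝ) + 2))

/-- The path `p` can be raised at `(j,l)`: it is of the form `p' 𝒜_{j,l}⁻¹`. -/
def CanRaise (S : Setting) (i : ℕ) (k : ℤ) (p : List (ℝ × ℝ)) (j : ℕ) (l : ℤ) : Prop :=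
  ∃ p', LoweredTo S i k j l p' p

/-- The monomial group `ℳ`, realised as exponent functions: the free abelian group on the
symbols `Y_{i,k}`, `(i,k) ∈ X`, is identified with finitely supported functions `(ℕ × ℤ) → ℤ`,
written additively. -/
def Y (x : ℕ × ℤ) : (ℕ × ℤ) → ℤ := fun z => if z = x then 1 else 0

noncomputable def ind (s : Prop) : ℤ := @ite ℤ s (Classical.propDecidable s) 1 0

/-- The monomial `m(p)` of a path: `∏ Y_{j,l}` over upper corners times `∏ Y_{j,l}⁻¹`
over lower corners. -/
noncomputable def mon (S : Setting) (p : List (ℝ × ℝ)) : (ℕ × ℤ) → ℤ :=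
  fun x => ind (x ∈ Cp S p true) - ind (x ∈ Cp S p false)

/-- The monomials `A_{j,l}`, with the conventions `Y_{0,·} = Y_{N+1,·} = 1`. -/
def Amon (S : Setting) (j : ℕ) (l : ℤ) : (ℕ × ℤ) → ℤ :=
  match S with
  | .A n =>
      Y (j, l + 1) + Y (j, l - 1) - (if j = 1 then 0 else Y (j - 1, l))
        - (if j = n then 0 else Y (j + 1, l))
  | .B n _ =>
      if j = n then Y (n, l + 1) + Y (n, l - 1) - Y (n - 1, l)
      else if j = n - 1 then
        Y (n - 1, l + 2) + Y (n - 1, l - 2) - (if j = 1 then 0 else Y (n - 2, l))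
          - Y (n, l + 1) - Y (n, l - 1)
      else
        Y (j, l + 2) + Y (j, l - 2) - (if j = 1 then 0 else Y (j - 1, l)) - Y (j + 1, l)

/-- A monomial is dominant iff all its exponents are nonnegative. -/
def Dominant (m : (ℕ × ℤ) → ℤ) : Prop := ∀ x, 0 ≤ m x

/-- A monomial is anti-dominant iff all its exponents are nonpositive. -/
def AntiDominant (m : (ℕ × ℤ) → ℤ) : Prop := ∀ x, m x ≤ 0

/-- `(i',k')` is in snake position with respect to `(i,k)`. -/
def SnakePos : Setting → ℕ × ℤ → ℕ × ℤ → Prop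
  | .A _, ik, ik' => |(ik'.1 : ℤ) - (ik.1 : ℤ)| + 2 ≤ ik'.2 - ik.2
  | .B n _, ik, ik' =>
      if ik.1 = n ∧ ik'.1 = n then
        2 ≤ ik'.2 - ik.2 ∧ (ik'.2 - ik.2) % 4 = 2
      else if ik.1 = n ∨ ik'.1 = n then
        2 * |(ik'.1 : ℤ) - (ik.1 : ℤ)| + 3 ≤ ik'.2 - ik.2 ∧
          (ik'.2 - ik.2) % 4 = (2 * |(ik'.1 : ℤ) - (ik.1 : ℤ)| - 1) % 4
      else
        2 * |(ik'.1 : ℤ) - (ik.1 : ℤ)| + 4 ≤ ik'.2 - ik.2 ∧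
          (ik'.2 - ik.2) % 4 = (2 * |(ik'.1 : ℤ) - (ik.1 : ℤ)|) % 4

/-- A snake: a sequence of points of `X`, each in snake position w.r.t. the previous one. -/
def IsSnake (S : Setting) {T : ℕ} (w : Fin T → ℕ × ℤ) : Prop :=
  (∀ t, w t ∈ X S) ∧
  ∀ (t : Fin T) (h : (t : ℕ) + 1 < T), SnakePos S (w t) (w ⟨(t : ℕ) + 1, h⟩)

/-- `p` is strictly above `p'`. -/
def StrictlyAbove (p p' : List (ℝ × ℝ)) : Prop :=
  ∀ a ∈ p, ∀ b ∈ p', a.1 = b.1 → a.2 < b.2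

/-- A tuple of paths is non-overlapping. -/
def NonOverlapping {T : ℕ} (ps : Fin T → List (ℝ × ℝ)) : Prop :=
  ∀ s t : Fin T, s < t → StrictlyAbove (ps s) (ps t)

/-- The set `𝒫̄` of non-overlapping tuples of paths attached to a snake. -/
def PBar (S : Setting) {T : ℕ} (w : Fin T → ℕ × ℤ) : Set (Fin T → List (ℝ × ℝ)) :=
  {ps | (∀ t, ps t ∈ P S (w t).1 (w t).2) ∧ NonOverlapping ps}

/-- The product `∏_t m(p_t)` of the monomials of a tuple of paths. -/
noncomputable def tmon (S : Setting) {T : ℕ} (ps : Fin T → List (ℝ × ℝ)) : (ℕ × ℤ) → ℤ :=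
  ∑ t, mon S (ps t)

/-- Lowering move at `jl` on a tuple of paths: one component is lowered, the others
are unchanged. -/
def TLoweredTo (S : Setting) {T : ℕ} (w : Fin T → ℕ × ℤ) (jl : ℕ × ℤ)
    (ps ps' : Fin T → List (ℝ × ℝ)) : Prop :=
  ∃ t, LoweredTo S (w t).1 (w t).2 jl.1 jl.2 (ps t) (ps' t) ∧ ∀ s, s ≠ t → ps' s = ps s

/-- Sequences of raising/lowering moves on a single path; the list records, for each move,
whether it was a lowering move (`true`) or a raising move (`false`), and its site. -/
inductive MoveSeq (S : Setting) (i : ℕ) (k : ℤ) :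
    List (ℝ × ℝ) → List (ℝ × ℝ) → List (Bool × (ℕ × ℤ)) → Prop where
  | nil (p : List (ℝ × ℝ)) : MoveSeq S i k p p []
  | lower {p q r : List (ℝ × ℝ)} {jl : ℕ × ℤ} {ms : List (Bool × (ℕ × ℤ))} :
      jl ∈ W S → LoweredTo S i k jl.1 jl.2 p q → MoveSeq S i k q r ms →
      MoveSeq S i k p r ((true, jl) :: ms)
  | raise {p q r : List (ℝ × ℝ)} {jl : ℕ × ℤ} {ms : List (Bool × (ℕ × ℤ))} :
      jl ∈ W S → LoweredTo S i k jl.1 jl.2 q p → MoveSeq S i k q r ms →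
      MoveSeq S i k p r ((false, jl) :: ms)

/-- Sequences of raising/lowering moves on tuples of paths, all of whose intermediate
tuples are non-overlapping. -/
inductive TMoveSeq (S : Setting) {T : ℕ} (w : Fin T → ℕ × ℤ) :
    (Fin T → List (ℝ × ℝ)) → (Fin T → List (ℝ × ℝ)) → List (Bool × (ℕ × ℤ)) → Prop where
  | nil (ps : Fin T → List (ℝ × ℝ)) : TMoveSeq S w ps ps []
  | lower {ps qs rs : Fin T → List (ℝ × ℝ)} {jl : ℕ × ℤ} {ms : List (Bool × (ℕ × ℤ))} :
      jl ∈ W S → TLoweredTo S w jl ps qs → NonOverlapping qs →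
      TMoveSeq S w qs rs ms → TMoveSeq S w ps rs ((true, jl) :: ms)
  | raise {ps qs rs : Fin T → List (ℝ × ℝ)} {jl : ℕ × ℤ} {ms : List (Bool × (ℕ × ℤ))} :
      jl ∈ W S → TLoweredTo S w jl qs ps → NonOverlapping qs →
      TMoveSeq S w qs rs ms → TMoveSeq S w ps rs ((false, jl) :: ms)

/-- Sequences of lowering moves on tuples of paths, all of whose intermediate tuples
are non-overlapping; the list records the sites, in order. -/
inductive TLowerSeq (S : Setting) {T : ℕ} (w : Fin T → ℕ × ℤ) :
    (Fin T → List (ℝ × ℝ)) → (Fin T → List (ℝ × ℝ)) → List (ℕ × ℤ) → Prop where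
  | nil (ps : Fin T → List (ℝ × ℝ)) : TLowerSeq S w ps ps []
  | cons {ps qs rs : Fin T → List (ℝ × ℝ)} {jl : ℕ × ℤ} {ms : List (ℕ × ℤ)} :
      jl ∈ W S → TLoweredTo S w jl ps qs → NonOverlapping qs →
      TLowerSeq S w qs rs ms → TLowerSeq S w ps rs (jl :: ms)

/-- Weak order on paths with the same x-coordinates: `p` is weakly above `p'`. -/
def WeaklyAbove (p p' : List (ℝ × ℝ)) : Prop :=
  p.length = p'.length ∧ ∀ r, r < p.length → (pt p r).2 ≤ (pt p' r).2

/-- `p` is weakly below `p'`. -/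
def WeaklyBelow (p p' : List (ℝ × ℝ)) : Prop :=
  p.length = p'.length ∧ ∀ r, r < p.length → (pt p' r).2 ≤ (pt p r).2

/-- The path `top(p, p')`. -/
def topPath (p p' : List (ℝ × ℝ)) : List (ℝ × ℝ) :=
  List.zipWith (fun a b => (a.1, min a.2 b.2)) p p'

/-- The distinguished point contained in the highest path `p⁺_{i,k}`. -/
def highPoint : Setting → ℕ → ℤ → ℝ × ℝ
  | .A _, i, k => ((i : ℝ), (k : ℝ))
  | .B n ε, i, k =>
      if i = n then (2 * (n : ℝ) - 1, (k : ℝ) - ε)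
      else (((iotaB n (i, k)).1 : ℝ), ((iotaB n (i, k)).2 : ℝ))

/-- The distinguished point contained in the lowest path `p⁻_{i,k}`. -/
def lowPoint : Setting → ℕ → ℤ → ℝ × ℝ
  | .A n, i, k => ((n : ℝ) + 1 - (i : ℝ), (k : ℝ) + (n : ℝ) + 1)
  | .B n ε, i, k =>
      if i = n then (2 * (n : ℝ) - 1, (k : ℝ) + 4 * (n : ℝ) - 2 + ε)
      else (((iotaB n (i, k + 4 * (n : ℤ) - 2)).1 : ℝ),
            ((iotaB n (i, k + 4 * (n : ℤ) - 2)).2 : ℝ))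

/-- The highest path `p⁺_{i,k}` : the path of `𝒫_{i,k}` with no lower corners. -/
noncomputable def highestPath (S : Setting) (i : ℕ) (k : ℤ) : List (ℝ × ℝ) :=
  Classical.epsilon fun p => p ∈ P S i k ∧ Cp S p false = ∅

/-- The lowest path `p⁻_{i,k}` : the path of `𝒫_{i,k}` with no upper corners. -/
noncomputable def lowestPath (S : Setting) (i : ℕ) (k : ℤ) : List (ℝ × ℝ) :=
  Classical.epsilon fun p => p ∈ P S i k ∧ Cp S p true = ∅

/-!
The height function of a tuple of paths sends a gate, that is, a site at which some `A_{j,ℓ}` can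
move a path, to the number of paths passing below it. The monomial of the tuple is a discrete
Laplacian of its height function, and multiplying by `A_{j,ℓ}⁻¹` amounts to raising the height at
`(j,ℓ)` by one. On functions that vanish on the boundary columns and at gates far up, this Laplacian
is injective, so the difference of the monomials of two tuples determines the difference of their
heights.

Suppose `m A_{i,k}⁻¹ A_{j,ℓ}` comes from a tuple `q`. Its height is then that of `p` plus one at
`(i,k)` and minus one at `(j,ℓ)`. The componentwise lower of `p` and `q` is again a non-overlapping
tuple, and its height is the maximum of the two, which is that of `p` plus one at `(i,k)`. Hence
`m A_{i,k}⁻¹` comes from a tuple as well.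
-/

theorem ind_pos {s : Prop} (h : s) : ind s = 1 := if_pos h

theorem ind_neg {s : Prop} (h : ¬s) : ind s = 0 := if_neg h

theorem ind_congr {s t : Prop} (h : s ↔ t) : ind s = ind t := by rw [propext h]

theorem ind_mono {s t : Prop} (h : s → t) : ind s ≤ ind t := by
  by_cases hs : s <;> by_cases ht : t <;> simp_all [ind]

theorem ind_or_of_not_and {s t : Prop} (h : ¬(s ∧ t)) : ind (s ∨ t) = ind s + ind t := by
  by_cases hs : s <;> by_cases ht : t <;> simp_all [ind]

/-! ### The discrete Laplacian -/

/-- The gates `y` such that `Y_x` has exponent `-1` in `A_y`; gates in the boundary columns, where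
no `A_y` exists, are included. -/
def nbrs : Setting → ℕ × ℤ → List (ℕ × ℤ)
  | .A _, x => [(x.1 - 1, x.2), (x.1 + 1, x.2)]
  | .B n _, x => if x.1 = n then [(n - 1, x.2 - 1), (n - 1, x.2 + 1)]
      else [(x.1 - 1, x.2), (x.1 + 1, x.2)]

/-- `W` enlarged by the boundary columns: the sites at which height functions are evaluated. -/
def gates : Setting → Set (ℕ × ℤ)
  | .A n => {x | x.1 ≤ n + 1 ∧ ((x.1 : ℤ) - x.2) % 2 = 0}
  | .B n _ => {x | x.1 ≤ n ∧ x.2 % 2 = 0}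

/-- The columns of `gates` that do not meet `W`. There the height of a tuple depends only on the end
points of its paths. -/
def IsBoundary : Setting → ℕ → Prop
  | .A n, j => j = 0 ∨ j = n + 1
  | .B _ _, j => j = 0

/-- The discrete Laplacian of a function on `gates`. It takes the height of a tuple of paths to its
monomial and `Y_{j,ℓ}` to `A_{j,ℓ}⁻¹`; it is extended by zero outside `X`. -/
noncomputable def Lap (S : Setting) : (ℕ × ℤ → ℤ) →+ (ℕ × ℤ → ℤ) where
  toFun E x := open Classical in if x ∈ X S then
    ((nbrs S x).map E).sum - E (x.1, x.2 + rr S x.1) - E (x.1, x.2 - rr S x.1) else 0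
  map_zero' := by ext x; simp [Pi.zero_def]
  map_add' E F := by
    ext x
    simp only [Pi.add_apply]
    split_ifs
    · rw [show (nbrs S x).map (E + F) = (nbrs S x).map fun y => E y + F y from rfl,
        List.sum_map_add]
      ring
    · rfl

theorem Lap_apply {S : Setting} {x : ℕ × ℤ} (hx : x ∈ X S) (E : ℕ × ℤ → ℤ) :
    Lap S E x = ((nbrs S x).map E).sum - E (x.1, x.2 + rr S x.1) - E (x.1, x.2 - rr S x.1) :=
  if_pos hx

theorem Lap_apply_of_notMem {S : Setting} {x : ℕ × ℤ} (hx : x ∉ X S) (E : ℕ × ℤ → ℤ) :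
    Lap S E x = 0 :=
  if_neg hx

section Laplacian

variable {S : Setting} {x y v : ℕ × ℤ}

theorem mem_gates_of_mem_nbrs (hx : x ∈ X S) (hy : y ∈ nbrs S x) : y ∈ gates S := by
  cases S <;> simp only [X, XA, XB, nbrs, gates, Set.mem_ofPred_eq] at * <;> grind

theorem add_rr_mem_gates (hx : x ∈ X S) : (x.1, x.2 + rr S x.1) ∈ gates S := by
  cases S <;> simp only [X, XA, XB, rr, gates, Set.mem_ofPred_eq] at * <;> grind

theorem sub_rr_mem_gates (hx : x ∈ X S) : (x.1, x.2 - rr S x.1) ∈ gates S := by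
  cases S <;> simp only [X, XA, XB, rr, gates, Set.mem_ofPred_eq] at * <;> grind

theorem not_isBoundary_of_mem_W (hS : S.valid) (hx : x ∈ W S) : ¬IsBoundary S x.1 := by
  cases S <;>
    simp only [W, X, XA, XB, IsBoundary, Setting.valid, Set.mem_ofPred_eq] at * <;> omega

theorem mem_W_of_mem_gates (hx : x ∈ gates S) (hb : ¬IsBoundary S x.1) : x ∈ W S := by
  cases S <;> simp only [W, X, XA, XB, rr, gates, IsBoundary, Set.mem_ofPred_eq] at * <;> grind

theorem Lap_congr {E F : ℕ × ℤ → ℤ} (h : Set.EqOn E F (gates S)) : Lap S E = Lap S F := by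
  ext x
  by_cases hx : x ∈ X S
  · rw [Lap_apply hx, Lap_apply hx, h (add_rr_mem_gates hx), h (sub_rr_mem_gates hx),
      List.map_congr_left fun y hy => h (mem_gates_of_mem_nbrs hx hy)]
  · rw [Lap_apply_of_notMem hx, Lap_apply_of_notMem hx]

theorem Lap_Y (hS : S.valid) (hv : v ∈ W S) : Lap S (Y v) = -Amon S v.1 v.2 := by
  obtain ⟨i, k⟩ := v
  ext ⟨j, l⟩
  by_cases hx : (j, l) ∈ X S
  · rw [Lap_apply hx]
    cases S <;>
      simp only [X, XA, XB, W, rr, Setting.valid, nbrs, Amon, Y, ite_apply, Pi.neg_apply,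
        Pi.sub_apply, Pi.add_apply, Pi.zero_apply, Prod.mk.injEq, Set.mem_ofPred_eq] at * <;>
      grind (splits := 20) [Y]
  · rw [Lap_apply_of_notMem hx]
    cases S <;>
      simp only [X, XA, XB, W, rr, Setting.valid, Amon, Y, ite_apply, Pi.neg_apply,
        Pi.sub_apply, Pi.add_apply, Pi.zero_apply, Prod.mk.injEq, Set.mem_ofPred_eq] at * <;>
      grind

theorem two_mul_sub_rr_lt_of_mem_nbrs (hS : S.valid) (hx : x ∈ W S)
    (hy : y ∈ nbrs S (x.1, x.2 - rr S x.1)) :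
    2 * y.2 - rr S y.1 < 2 * x.2 - rr S x.1 := by
  cases S <;> simp only [X, XA, XB, W, rr, nbrs, Setting.valid, Set.mem_ofPred_eq] at * <;> grind

theorem eqOn_zero_of_Lap_eq_zero (hS : S.valid) {D : ℕ × ℤ → ℤ} {L : ℤ} (hD : Lap S D = 0)
    (hb : ∀ x ∈ gates S, IsBoundary S x.1 → D x = 0) (hL : ∀ x ∈ gates S, x.2 ≤ L → D x = 0) :
    Set.EqOn D 0 (gates S) := by
  intro x hx
  induction h : (2 * x.2 - rr S x.1 - 2 * L + 2).toNat using Nat.strong_induction_on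
    generalizing x with | _ m ih
  have hr : 1 ≤ rr S x.1 ∧ rr S x.1 ≤ 2 := by cases S <;> grind [rr]
  by_cases hxL : x.2 ≤ L
  · exact hL x hx hxL
  by_cases hxb : IsBoundary S x.1
  · exact hb x hx hxb
  have hxW := mem_W_of_mem_gates hx hxb
  have lower : ∀ y ∈ gates S, 2 * y.2 - rr S y.1 < 2 * x.2 - rr S x.1 → D y = 0 :=
    fun y hy hlt => ih _ (by omega) hy rfl
  have hLap := congrFun hD (x.1, x.2 - rr S x.1)
  rw [Lap_apply hxW, List.sum_eq_zero, lower _ (sub_rr_mem_gates hxW) (by dsimp only; omega)]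
    at hLap
  · simpa using hLap
  · simp only [List.mem_map]
    rintro _ ⟨y, hy, rfl⟩
    exact lower y (mem_gates_of_mem_nbrs hxW hy) (two_mul_sub_rr_lt_of_mem_nbrs hS hxW hy)

end Laplacian

/-! ### Sequences with steps of constant size -/

theorem exists_sub_eq_int_mul_of_steps {s : ℝ} {f g : ℕ → ℝ} {M : ℕ} (h0 : f 0 = g 0)
    (hf : ∀ r < M, f (r + 1) - f r = s ∨ f (r + 1) - f r = -s)
    (hg : ∀ r < M, g (r + 1) - g r = s ∨ g (r + 1) - g r = -s) :
    ∀ r ≤ M, ∃ m : ℤ, f r - g r = m * (2 * s) := by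
  intro r
  induction r with
  | zero => exact fun _ => ⟨0, by simp [h0]⟩
  | succ r ih =>
    intro hr
    obtain ⟨m, hm⟩ := ih (by omega)
    rcases hf r hr with hf | hf <;> rcases hg r hr with hg | hg
    · exact ⟨m, by linarith⟩
    · exact ⟨m + 1, by push_cast; linarith⟩
    · exact ⟨m - 1, by push_cast; linarith⟩
    · exact ⟨m, by linarith⟩

theorem exists_int_of_steps {s z : ℤ} {f : ℕ → ℝ} {M : ℕ} (h0 : f 0 = z)
    (hf : ∀ r < M, f (r + 1) - f r = s ∨ f (r + 1) - f r = -s) {r : ℕ} (hr : r ≤ M) :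
    ∃ y : ℤ, f r = y ∧ 2 * s ∣ z + s * r - y := by
  obtain ⟨m, hm⟩ := exists_sub_eq_int_mul_of_steps (s := s) (g := fun r => z + s * r)
    (by simpa using h0) hf (fun r _ => Or.inl (by push_cast; ring)) r hr
  exact ⟨z + s * r + m * (2 * s), by push_cast; linarith, -m, by ring⟩

theorem eq_or_le_abs_sub_of_steps {s : ℝ} {f g : ℕ → ℝ} {M : ℕ} (hs : 0 ≤ s) (h0 : f 0 = g 0)
    (hf : ∀ r < M, f (r + 1) - f r = s ∨ f (r + 1) - f r = -s)
    (hg : ∀ r < M, g (r + 1) - g r = s ∨ g (r + 1) - g r = -s) {r : ℕ} (hr : r ≤ M) :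
    f r = g r ∨ 2 * s ≤ |f r - g r| := by
  obtain ⟨m, hm⟩ := exists_sub_eq_int_mul_of_steps h0 hf hg r hr
  rcases eq_or_ne m 0 with rfl | hm0
  · exact Or.inl (by simpa [sub_eq_zero] using hm)
  · right
    have : (1 : ℝ) ≤ |(m : ℝ)| := by exact_mod_cast Int.one_le_abs hm0
    rw [hm, abs_mul, abs_of_nonneg (by positivity : 0 ≤ 2 * s)]
    exact le_mul_of_one_le_left (by positivity) this

theorem max_step {a b a' b' s : ℝ} (hs : 0 ≤ s) (h : a = b ∨ 2 * s ≤ |a - b|)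
    (ha : a' - a = s ∨ a' - a = -s) (hb : b' - b = s ∨ b' - b = -s) :
    max a' b' - max a b = s ∨ max a' b' - max a b = -s := by
  grind [abs_le]

theorem ind_turn {y l r : ℤ} {a b : ℝ} (hr : 0 < r) (hy : 2 * r ∣ l - y)
    (ha : |a - y| ∈ Set.Ioo 0 (2 * r : ℝ)) (hb : |b - y| ∈ Set.Ioo 0 (2 * r : ℝ)) :
    ind ((y : ℝ) = l ∧ l < a ∧ l < b) - ind ((y : ℝ) = l ∧ a < l ∧ b < l) =
      ind (l < a) + ind (l < b) - ind ((l : ℝ) + r < y) - ind ((l : ℝ) - r < y) := by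
  obtain ⟨m, hm⟩ := hy
  have hr' : (0 : ℝ) < r := by exact_mod_cast hr
  have hl : (l : ℝ) = y + 2 * r * m := by exact_mod_cast (by linarith : l = y + 2 * r * m)
  obtain ⟨ha, ha'⟩ := ha
  obtain ⟨hb, hb'⟩ := hb
  rw [abs_lt] at ha' hb'
  rcases lt_trichotomy m 0 with h | rfl | h
  · have hlt : (l : ℝ) + 2 * r ≤ y := by
      have : (m : ℝ) ≤ -1 := by exact_mod_cast (by omega : m ≤ -1)
      nlinarith
    rw [ind_neg (by grind), ind_neg (by grind), ind_pos (by grind), ind_pos (by grind),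
      ind_pos (by grind), ind_pos (by grind)]
    rfl
  · simp only [Int.cast_zero, mul_zero, add_zero] at hl
    have ha₀ : a ≠ y := by simpa [sub_eq_zero] using ha
    have hb₀ : b ≠ y := by simpa [sub_eq_zero] using hb
    simp only [ind, hl]
    grind
  · have hlt : (y : ℝ) + 2 * r ≤ l := by
      have : (1 : ℝ) ≤ m := by exact_mod_cast (by omega : 1 ≤ m)
      nlinarith
    rw [ind_neg (by grind), ind_neg (by grind), ind_neg (by grind), ind_neg (by grind),
      ind_neg (by grind), ind_neg (by grind)]
    rfl

theorem ind_centre_of_dvd_add {y ε : ℝ} {z c : ℤ} (hε : 0 < ε) (hε' : ε < 1)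
    (hy : y - z = 1 + ε ∨ y - z = -(1 + ε)) (hc : 4 ∣ c - z + 1) :
    ind (y = c - ε) - ind (y = c + ε) = ind ((c : ℝ) - 1 < z) - ind ((c : ℝ) + 1 < y) := by
  obtain ⟨m, hm⟩ := hc
  have hc : (c : ℝ) = z - 1 + 4 * m := by exact_mod_cast (by linarith : c = z - 1 + 4 * m)
  have hm : (m : ℝ) ≤ -1 ∨ (m : ℝ) = 0 ∨ (1 : ℝ) ≤ m := by
    exact_mod_cast (by omega : m ≤ -1 ∨ m = 0 ∨ 1 ≤ m)
  simp only [ind]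
  grind

theorem ind_centre_of_dvd_sub {y ε : ℝ} {z c : ℤ} (hε : 0 < ε) (hε' : ε < 1)
    (hy : y - z = 1 + ε ∨ y - z = -(1 + ε)) (hc : 4 ∣ c - z - 1) :
    ind (y = c - ε) - ind (y = c + ε) = ind ((c : ℝ) + 1 < z) - ind ((c : ℝ) - 1 < y) := by
  obtain ⟨m, hm⟩ := hc
  have hc : (c : ℝ) = z + 1 + 4 * m := by exact_mod_cast (by linarith : c = z + 1 + 4 * m)
  have hm : (m : ℝ) ≤ -1 ∨ (m : ℝ) = 0 ∨ (1 : ℝ) ≤ m := by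
    exact_mod_cast (by omega : m ≤ -1 ∨ m = 0 ∨ 1 ≤ m)
  simp only [ind]
  grind

/-! ### Paths -/

section Points

variable {p q : List (ℝ × ℝ)} {r : ℕ}

theorem pt_mem (h : r < p.length) : pt p r ∈ p := by
  rw [pt, List.getD_eq_getElem _ _ h]
  exact List.getElem_mem h

theorem mem_iff_exists_pt {a : ℝ × ℝ} : a ∈ p ↔ ∃ r < p.length, pt p r = a := by
  refine ⟨fun h => ?_, fun ⟨r, hr, h⟩ => h ▸ pt_mem hr⟩
  obtain ⟨r, hr, rfl⟩ := List.mem_iff_getElem.1 h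
  exact ⟨r, hr, List.getD_eq_getElem _ _ hr⟩

theorem pt_reverse (h : r < p.length) : pt p.reverse r = pt p (p.length - 1 - r) := by
  simp only [pt, List.getD_eq_getElem?_getD, List.getElem?_reverse h]

theorem pt_append_left (h : r < p.length) : pt (p ++ q) r = pt p r :=
  List.getD_append _ _ _ _ h

theorem pt_append_add (p q : List (ℝ × ℝ)) (r : ℕ) : pt (p ++ q) (p.length + r) = pt q r := by
  rw [pt, List.getD_append_right _ _ _ _ (Nat.le_add_right _ _), Nat.add_sub_cancel_left, pt]

theorem fst_pt_eq_of_map_eq (h : p.map Prod.fst = q.map Prod.fst) (r : ℕ) :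
    (pt p r).1 = (pt q r).1 := by
  have hmap (p : List (ℝ × ℝ)) : (pt p r).1 = (p.map Prod.fst).getD r 0 :=
    (List.getD_map (d := (0, 0)) p Prod.fst).symm
  rw [hmap, hmap, h]

theorem map_fst_eq_of_pt (hlen : p.length = q.length)
    (h : ∀ r < p.length, (pt p r).1 = (pt q r).1) : p.map Prod.fst = q.map Prod.fst := by
  refine List.ext_getElem (by simpa using hlen) fun r hr hr' => ?_
  rw [List.length_map] at hr hr'
  simpa [pt, hr, hr'] using h r hr

/-- The componentwise lower of two paths, the counterpart of `topPath`. The points are drawn with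
the larger second coordinate further down. -/
noncomputable def botPath (p q : List (ℝ × ℝ)) : List (ℝ × ℝ) :=
  List.zipWith (fun a b => (a.1, max a.2 b.2)) p q

theorem length_botPath (h : p.length = q.length) : (botPath p q).length = p.length := by
  simp [botPath, h]

theorem pt_botPath (h : p.length = q.length) (r : ℕ) :
    pt (botPath p q) r = ((pt p r).1, max (pt p r).2 (pt q r).2) := by
  rw [pt, botPath, List.getD_eq_getElem?_getD, List.getElem?_zipWith]
  simp only [pt, List.getD_eq_getElem?_getD]
  rcases lt_or_ge r p.length with hr | hr
  · simp [hr, h ▸ hr]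
  · simp [hr, h ▸ hr]

theorem StrictlyAbove.botPath {p' q' : List (ℝ × ℝ)} (hp : p.map Prod.fst = p'.map Prod.fst)
    (hq : q.map Prod.fst = q'.map Prod.fst) (h : StrictlyAbove p q) (h' : StrictlyAbove p' q') :
    StrictlyAbove (botPath p p') (botPath q q') := by
  have hplen : p.length = p'.length := by simpa using congrArg List.length hp
  have hqlen : q.length = q'.length := by simpa using congrArg List.length hq
  intro a ha b hb hab
  obtain ⟨r, hr, rfl⟩ := mem_iff_exists_pt.1 ha
  obtain ⟨s, hs, rfl⟩ := mem_iff_exists_pt.1 hb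
  rw [length_botPath hplen] at hr
  rw [length_botPath hqlen] at hs
  simp only [pt_botPath hplen, pt_botPath hqlen] at hab ⊢
  refine max_lt_max (h _ (pt_mem hr) _ (pt_mem hs) hab)
    (h' _ (pt_mem (hplen ▸ hr)) _ (pt_mem (hqlen ▸ hs)) ?_)
  rw [← fst_pt_eq_of_map_eq hp, ← fst_pt_eq_of_map_eq hq, hab]

end Points

section TypeA

variable {n i : ℕ} {k : ℤ} {p q : List (ℝ × ℝ)}

theorem exists_int_of_mem_pathsA (hp : p ∈ pathsA n i k) {r : ℕ} (hr : r ≤ n + 1) :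
    ∃ y : ℤ, (pt p r).2 = y ∧ (2 : ℤ) ∣ i + k + r - y := by
  obtain ⟨-, -, h0, -, hstep⟩ := hp
  simpa using exists_int_of_steps (s := 1) (z := i + k) (f := fun r => (pt p r).2) (M := n + 1)
    (by simpa using h0) (fun r hr => by simpa using hstep r (by omega)) hr

theorem abs_sub_of_mem_pathsA (hp : p ∈ pathsA n i k) {r : ℕ} (hr : r ≤ n) :
    |(pt p (r + 1)).2 - (pt p r).2| = 1 :=
  (abs_eq zero_le_one).2 (hp.2.2.2.2 r hr)

theorem mem_Cp_iff_of_mem_pathsA (hp : p ∈ pathsA n i k) {x : ℕ × ℤ} {up : Bool} :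
    x ∈ Cp (.A n) p up ↔ (1 ≤ x.1 ∧ x.1 ≤ n) ∧ (pt p x.1).2 = x.2 ∧
      if up then x.2 < (pt p (x.1 - 1)).2 ∧ x.2 < (pt p (x.1 + 1)).2
      else (pt p (x.1 - 1)).2 < x.2 ∧ (pt p (x.1 + 1)).2 < x.2 := by
  simp only [Cp, Set.mem_ofPred_eq, and_assoc, Prod.ext_iff]
  refine and_congr_right fun hj => and_congr_right fun hjn => ?_
  have hprev := hp.2.2.2.2 (x.1 - 1) (by omega)
  have hnext := hp.2.2.2.2 x.1 hjn
  rw [Nat.sub_add_cancel hj] at hprev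
  simp only [hp.2.1 x.1 (by omega), true_and]
  cases up <;> grind

theorem Cp_subset_X_of_mem_pathsA (hw : (i, k) ∈ XA n) (hp : p ∈ pathsA n i k) (up : Bool) :
    Cp (.A n) p up ⊆ XA n := by
  rintro ⟨j, l⟩ hx
  obtain ⟨⟨hj, hjn⟩, hy, -⟩ := (mem_Cp_iff_of_mem_pathsA hp).1 hx
  obtain ⟨y, hy', hdvd⟩ := exists_int_of_mem_pathsA hp (r := j) (by omega)
  have hyl : y = l := by exact_mod_cast hy'.symm.trans hy
  simp only [XA, Set.mem_ofPred_eq] at hw ⊢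
  omega

theorem mon_eq_Lap_of_mem_pathsA (hw : (i, k) ∈ XA n) (hp : p ∈ pathsA n i k) :
    mon (.A n) p = Lap (.A n) fun x => ind ((x.2 : ℝ) < (pt p x.1).2) := by
  ext ⟨j, l⟩
  by_cases hx : (j, l) ∈ X (.A n)
  · have ⟨hj, hjn, _⟩ : 1 ≤ j ∧ j ≤ n ∧ ((j : ℤ) - l) % 2 = 1 := hx
    obtain ⟨y, hy, hdvd⟩ := exists_int_of_mem_pathsA hp (r := j) (by omega)
    have hprev := abs_sub_of_mem_pathsA hp (r := j - 1) (by omega)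
    have hnext := abs_sub_of_mem_pathsA hp hjn
    rw [Nat.sub_add_cancel hj, abs_sub_comm, hy] at hprev
    rw [hy] at hnext
    have hw' : ((i : ℤ) - k) % 2 = 1 := hw.2.2
    have := ind_turn (l := l) (r := 1) (y := y) one_pos (by omega)
      (a := (pt p (j - 1)).2) (b := (pt p (j + 1)).2)
      (by norm_num [hprev]) (by norm_num [hnext])
    simp only [mon, mem_Cp_iff_of_mem_pathsA hp, Lap_apply hx, nbrs, rr, hy, hj, hjn]
    simpa [sub_sub, add_comm] using this
  · rw [Lap_apply_of_notMem hx, mon, ind_neg fun h => hx (Cp_subset_X_of_mem_pathsA hw hp _ h),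
      ind_neg fun h => hx (Cp_subset_X_of_mem_pathsA hw hp _ h), sub_self]

theorem botPath_mem_pathsA (hp : p ∈ pathsA n i k) (hq : q ∈ pathsA n i k) :
    botPath p q ∈ pathsA n i k := by
  obtain ⟨hlen, hx, h0, h1, hstep⟩ := hp
  obtain ⟨hlen', -, h0', h1', hstep'⟩ := hq
  have hpq : p.length = q.length := hlen.trans hlen'.symm
  refine ⟨by rw [length_botPath hpq, hlen], ?_, ?_, ?_, ?_⟩ <;> simp only [pt_botPath hpq]
  · exact hx
  · rw [h0, h0', max_self]
  · rw [h1, h1', max_self]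
  · intro r hr
    have hdiff := eq_or_le_abs_sub_of_steps (f := fun r => (pt p r).2) (g := fun r => (pt q r).2)
      zero_le_one (h0.trans h0'.symm) (fun r hr => hstep r (Nat.lt_succ_iff.1 hr))
      (fun r hr => hstep' r (Nat.lt_succ_iff.1 hr)) (Nat.le_succ_of_le hr)
    exact max_step zero_le_one hdiff (hstep r hr) (hstep' r hr)

end TypeA

/-! ### Type B corners -/

section Turn

/-- The path `p` turns at the point `u`: `u` is an interior point of `p` above both neighbouring
points if `up` holds, and below both otherwise. These are the corners of `p`, before the
exceptions made for certain columns. -/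
def IsTurn (p : List (ℝ × ℝ)) (up : Bool) (u : ℝ × ℝ) : Prop :=
  ∃ r : ℕ, 1 ≤ r ∧ r + 1 < p.length ∧ pt p r = u ∧
    if up then (pt p r).2 < (pt p (r - 1)).2 ∧ (pt p r).2 < (pt p (r + 1)).2
    else (pt p (r - 1)).2 < (pt p r).2 ∧ (pt p (r + 1)).2 < (pt p r).2

variable {p q : List (ℝ × ℝ)} {up : Bool} {u : ℝ × ℝ}

theorem IsTurn.reverse (h : IsTurn p up u) : IsTurn p.reverse up u := by
  obtain ⟨r, hr, hr', hu, hturn⟩ := h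
  refine ⟨p.length - 1 - r, by omega, by rw [List.length_reverse]; omega, ?_⟩
  rw [pt_reverse (by omega), pt_reverse (by omega), pt_reverse (by omega),
    show p.length - 1 - (p.length - 1 - r) = r by omega,
    show p.length - 1 - (p.length - 1 - r - 1) = r + 1 by omega,
    show p.length - 1 - (p.length - 1 - r + 1) = r - 1 by omega]
  exact ⟨hu, by cases up <;> exact hturn.symm⟩

theorem isTurn_reverse_iff : IsTurn p.reverse up u ↔ IsTurn p up u :=
  ⟨fun h => p.reverse_reverse ▸ h.reverse, IsTurn.reverse⟩

theorem isTurn_append_iff (hp : u ≠ pt p (p.length - 1)) (hq : u ≠ pt q 0) :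
    IsTurn (p ++ q) up u ↔ IsTurn p up u ∨ IsTurn q up u := by
  constructor
  · rintro ⟨r, hr, hr', hu, hturn⟩
    rw [List.length_append] at hr'
    rcases lt_or_ge (r + 1) p.length with h | h
    · rw [pt_append_left (by omega)] at hu
      rw [pt_append_left (by omega), pt_append_left (by omega), pt_append_left h] at hturn
      exact Or.inl ⟨r, hr, h, hu, hturn⟩
    rcases eq_or_lt_of_le h with h | h
    · rw [pt_append_left (by omega), show r = p.length - 1 by omega] at hu
      exact absurd hu.symm hp
    obtain ⟨s, rfl⟩ := Nat.exists_eq_add_of_le (Nat.lt_succ_iff.1 h)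
    rw [pt_append_add] at hu
    obtain rfl | hs := Nat.eq_zero_or_pos s
    · exact absurd hu.symm hq
    rw [Nat.add_sub_assoc hs, Nat.add_assoc, pt_append_add, pt_append_add, pt_append_add] at hturn
    exact Or.inr ⟨s, hs, by omega, hu, hturn⟩
  · rintro (⟨r, hr, hr', hu, hturn⟩ | ⟨r, hr, hr', hu, hturn⟩)
    · refine ⟨r, hr, by rw [List.length_append]; omega, ?_⟩
      rw [pt_append_left (by omega), pt_append_left (by omega), pt_append_left (by omega)]
      exact ⟨hu, hturn⟩
    · refine ⟨p.length + r, by omega, by rw [List.length_append]; omega, ?_⟩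
      rw [Nat.add_sub_assoc hr, Nat.add_assoc, pt_append_add, pt_append_add, pt_append_add]
      exact ⟨hu, hturn⟩

end Turn

section CornersB

variable {n : ℕ} {ε : ℝ} {x : ℕ × ℤ} {p : List (ℝ × ℝ)}

theorem mem_Cp_iff_isTurn {up : Bool} (hx : x ∈ XB n) (hxn : x.1 < n) :
    x ∈ Cp (.B n ε) p up ↔ IsTurn p up ((iotaB n x).1, (iotaB n x).2) := by
  have hcol : (iotaB n x).1 ≠ 0 ∧ (iotaB n x).1 ≠ 2 * n - 1 ∧ (iotaB n x).1 ≠ 4 * n - 2 := by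
    simp only [XB, iotaB, Set.mem_ofPred_eq] at hx ⊢
    split_ifs <;> dsimp only <;> omega
  simp only [Cp, Set.mem_ofPred_eq, IsTurn]
  grind

theorem mon_apply_of_lt (hx : x ∈ XB n) (hxn : x.1 < n) :
    mon (.B n ε) p x = ind (IsTurn p true ((iotaB n x).1, (iotaB n x).2)) -
      ind (IsTurn p false ((iotaB n x).1, (iotaB n x).2)) := by
  simp only [mon, mem_Cp_iff_isTurn hx hxn]

theorem mon_apply_centre (hx : x ∈ XB n) (hxn : x.1 = n) :
    mon (.B n ε) p x =
      ind ((2 * (n : ℝ) - 1, (x.2 : ℝ) - ε) ∈ p) - ind ((2 * (n : ℝ) - 1, (x.2 : ℝ) + ε) ∈ p) := by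
  have hcol : (iotaB n x).1 = 2 * n - 1 := by rw [iotaB, if_pos hxn]
  simp only [mon, Cp, Set.mem_ofPred_eq, hx, hcol, hxn, ind]
  grind

theorem mon_apply_of_notMem (hx : x ∉ XB n) : mon (.B n ε) p x = 0 := by
  rw [mon, ind_neg fun h => hx h.1, ind_neg fun h => hx h.1, sub_self]

end CornersB

/-! ### Spin paths -/

section Spin

/-- In type B, `A_x` can move point number `x.1` of some path of `𝒫_{N,ℓ}`: that point lies in the
column of `x`, and its height is congruent modulo `4` to one of `x.2 ± 2` if `x.1 < N`, and to one
of `x.2 ± (1 + ε)` if `x.1 = N`. -/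
def SpinMeets (n : ℕ) (l : ℤ) (x : ℕ × ℤ) : Prop :=
  (4 : ℤ) ∣ l + 2 * n + 2 * x.1 + 1 - x.2

/-- Indicator of a path of `𝒫_{N,ℓ}` passing strictly below the gate `x`: its contribution to height
functions. -/
noncomputable def spinBelow (n : ℕ) (l : ℤ) (p : List (ℝ × ℝ)) (x : ℕ × ℤ) : ℤ :=
  ind (SpinMeets n l x ∧ (x.2 : ℝ) < (pt p x.1).2)

variable {n : ℕ} {ε : ℝ} {l : ℤ} {x : ℕ × ℤ} {p q : List (ℝ × ℝ)}

theorem exists_int_of_mem_pathsBspin (hp : p ∈ pathsBspin n ε l) {r : ℕ} (hr : r < n) :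
    ∃ y : ℤ, (pt p r).2 = y ∧ (4 : ℤ) ∣ l + 2 * n + 2 * r - 1 - y := by
  obtain ⟨-, -, -, h0, hstep, -⟩ := hp
  obtain ⟨y, hy, hdvd⟩ := exists_int_of_steps (s := 2) (z := l + 2 * n - 1) (M := n - 1)
    (f := fun r => (pt p r).2) (by simpa using h0)
    (fun r hr => by simpa using hstep r (by omega)) (Nat.le_sub_one_of_lt hr)
  exact ⟨y, hy, by omega⟩

theorem fst_of_mem_pathsBspin (hl : l % 2 = 1) (hp : p ∈ pathsBspin n ε l) {r : ℕ} (hr : r ≤ n)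
    {c : ℤ} (hc : (4 : ℤ) ∣ l + 2 * n + 2 * r - 1 - c) : (pt p r).1 = (iotaB n (r, c)).1 := by
  obtain ⟨-, hside, hcentre, -⟩ := hp
  rcases hr.eq_or_lt with rfl | hr
  · simp [iotaB, hcentre]
  · rw [iotaB, if_neg hr.ne]
    split_ifs at hside ⊢
    · simp [hside r hr]
    · dsimp only at *; omega
    · dsimp only at *; omega
    · simp [hside r hr]

theorem fst_eq_iota_iff (hl : l % 2 = 1) (hp : p ∈ pathsBspin n ε l) {r : ℕ} (hr : r ≤ n)
    (hx : x ∈ XB n) (hxn : x.1 < n) :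
    (pt p r).1 = (iotaB n x).1 ↔ r = x.1 ∧ (4 : ℤ) ∣ l + 2 * n + 2 * x.1 - 1 - x.2 := by
  refine ⟨fun h => ?_, fun ⟨hrx, hdvd⟩ => hrx ▸ fst_of_mem_pathsBspin hl hp hr (hrx ▸ hdvd)⟩
  rw [fst_of_mem_pathsBspin hl hp hr (c := l + 2 * n + 2 * r - 1) (by simp)] at h
  have h : (iotaB n (r, l + 2 * n + 2 * r - 1)).1 = (iotaB n x).1 := by exact_mod_cast h
  simp only [XB, iotaB, Set.mem_ofPred_eq] at hx h
  split_ifs at h <;> dsimp only at * <;> omega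

theorem dvd_of_isTurn {up : Bool} (hl : l % 2 = 1) (hp : p ∈ pathsBspin n ε l) (hx : x ∈ XB n)
    (hxn : x.1 < n) (h : IsTurn p up ((iotaB n x).1, (iotaB n x).2)) :
    (4 : ℤ) ∣ l + 2 * n + 2 * x.1 - 1 - x.2 := by
  obtain ⟨r, -, hr, hpt, -⟩ := h
  exact ((fst_eq_iota_iff hl hp (by rw [hp.1] at hr; omega) hx hxn).1 (congrArg Prod.fst hpt)).2

theorem isTurn_iff_of_mem_pathsBspin {up : Bool} (hl : l % 2 = 1) (hp : p ∈ pathsBspin n ε l)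
    (hx : x ∈ XB n) (hxn : x.1 < n) :
    IsTurn p up ((iotaB n x).1, (iotaB n x).2) ↔ (pt p x.1).2 = x.2 ∧
      if up then x.2 < (pt p (x.1 - 1)).2 ∧ x.2 < (pt p (x.1 + 1)).2
      else (pt p (x.1 - 1)).2 < x.2 ∧ (pt p (x.1 + 1)).2 < x.2 := by
  have hsnd : (iotaB n x).2 = x.2 := by unfold iotaB; split_ifs <;> rfl
  have hx1 : 1 ≤ x.1 := by simp only [XB, Set.mem_ofPred_eq] at hx; omega
  rw [hsnd]
  constructor
  · rintro ⟨r, -, hr, hpt, hturn⟩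
    rw [hp.1] at hr
    have h1 := congrArg Prod.fst hpt
    obtain ⟨rfl, -⟩ := (fst_eq_iota_iff hl hp (by omega) hx hxn).1 h1
    rw [hpt] at hturn
    exact ⟨by rw [hpt], hturn⟩
  · rintro ⟨hy, hturn⟩
    obtain ⟨y, hy', hdvd⟩ := exists_int_of_mem_pathsBspin hp hxn
    have hyx : y = x.2 := by exact_mod_cast hy'.symm.trans hy
    refine ⟨x.1, hx1, by rw [hp.1]; omega, Prod.ext ?_ hy, by rwa [hy]⟩
    exact (fst_eq_iota_iff hl hp hxn.le hx hxn).2 ⟨rfl, hyx ▸ hdvd⟩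

theorem mem_centre_iff_of_mem_pathsBspin (hl : l % 2 = 1) (hp : p ∈ pathsBspin n ε l) {v : ℝ} :
    (2 * (n : ℝ) - 1, v) ∈ p ↔ (pt p n).2 = v := by
  rw [mem_iff_exists_pt, hp.1]
  constructor
  · rintro ⟨r, hr, hpt⟩
    have h1 : (pt p r).1 = (2 * n - 1 : ℤ) := by simp [hpt]
    rw [fst_of_mem_pathsBspin hl hp (Nat.lt_succ_iff.1 hr) (c := l + 2 * n + 2 * r - 1) (by simp),
      Int.cast_inj] at h1
    obtain rfl : r = n := by
      simp only [iotaB] at h1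
      split_ifs at h1 <;> dsimp only at * <;> omega
    rw [hpt]
  · rintro rfl
    exact ⟨n, n.lt_succ_self, Prod.ext hp.2.2.1 rfl⟩

theorem abs_sub_of_mem_pathsBspin (hε : 0 < ε) (hε' : ε < 1) (hp : p ∈ pathsBspin n ε l) {r : ℕ}
    (hr : r < n) : |(pt p (r + 1)).2 - (pt p r).2| ∈ Set.Ioo (0 : ℝ) 4 := by
  obtain ⟨-, -, -, -, hstep, hlast⟩ := hp
  rcases (Nat.succ_le_of_lt hr).eq_or_lt with rfl | h
  · rw [Nat.succ_sub_one, ← abs_eq (by linarith)] at hlast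
    constructor <;> linarith
  · have := hstep r h
    rw [← abs_eq zero_le_two] at this
    norm_num [this]

theorem spinBelow_of_meets (h : SpinMeets n l x) :
    spinBelow n l p x = ind ((x.2 : ℝ) < (pt p x.1).2) :=
  ind_congr (and_iff_right h)

theorem spinBelow_of_not_meets (h : ¬SpinMeets n l x) : spinBelow n l p x = 0 :=
  ind_neg fun h' => h h'.1

theorem mon_apply_of_mem_pathsBspin (hl : l % 2 = 1) (hε : 0 < ε) (hε' : ε < 1)
    (hp : p ∈ pathsBspin n ε l) (hx : x ∈ XB n) (hxn : x.1 < n) :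
    mon (.B n ε) p x = Lap (.B n ε) (spinBelow n l p) x := by
  obtain ⟨j, c⟩ := x
  have hj : 1 ≤ j := by simp only [XB, Set.mem_ofPred_eq] at hx; omega
  obtain ⟨y, hy, hdvd⟩ := exists_int_of_mem_pathsBspin hp hxn
  rw [mon_apply_of_lt hx hxn, isTurn_iff_of_mem_pathsBspin hl hp hx hxn,
    isTurn_iff_of_mem_pathsBspin hl hp hx hxn, Lap_apply hx]
  simp only [nbrs, rr, hxn.ne, if_false, if_true, List.map_cons, List.map_nil, List.sum_cons,
    List.sum_nil, add_zero, Bool.false_eq_true] at hy hdvd hxn ⊢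
  by_cases hc : (4 : ℤ) ∣ l + 2 * n + 2 * j - 1 - c
  · have hprev := abs_sub_of_mem_pathsBspin hε hε' hp (r := j - 1) (by omega)
    have hnext := abs_sub_of_mem_pathsBspin hε hε' hp hxn
    rw [Nat.sub_add_cancel hj, abs_sub_comm, hy] at hprev
    rw [hy] at hnext
    have := ind_turn (l := c) (r := 2) (y := y) two_pos (by omega)
      (a := (pt p (j - 1)).2) (b := (pt p (j + 1)).2)
      (by norm_num at hprev ⊢; exact hprev) (by norm_num at hnext ⊢; exact hnext)
    rw [spinBelow_of_meets, spinBelow_of_meets, spinBelow_of_meets, spinBelow_of_meets, hy]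
    · simpa using this
    all_goals unfold SpinMeets; dsimp only; push_cast [hj]; omega
  · have hyc : (y : ℝ) ≠ c := fun h => hc (by rwa [Int.cast_inj.1 h] at hdvd)
    rw [spinBelow_of_not_meets, spinBelow_of_not_meets, spinBelow_of_not_meets,
      spinBelow_of_not_meets, ind_neg (by simp [hy, hyc]), ind_neg (by simp [hy, hyc])]
    · rfl
    all_goals unfold SpinMeets; dsimp only; push_cast [hj]; omega

theorem mon_apply_centre_of_mem_pathsBspin (hn : 1 ≤ n) (hl : l % 2 = 1) (hε : 0 < ε) (hε' : ε < 1)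
    (hp : p ∈ pathsBspin n ε l) (hx : x ∈ XB n) (hxn : x.1 = n) :
    mon (.B n ε) p x = Lap (.B n ε) (spinBelow n l p) x := by
  obtain ⟨j, c⟩ := x
  obtain rfl : j = n := hxn
  have hc : c % 2 = 1 := by simp only [XB, Set.mem_ofPred_eq] at hx; omega
  obtain ⟨z, hz, hdvd⟩ := exists_int_of_mem_pathsBspin hp (r := j - 1) (by omega)
  have hlast := hp.2.2.2.2.2
  rw [mon_apply_centre hx rfl, mem_centre_iff_of_mem_pathsBspin hl hp,
    mem_centre_iff_of_mem_pathsBspin hl hp, Lap_apply hx]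
  rw [hz] at hlast
  simp only [nbrs, rr, if_true, List.map_cons, List.map_nil, List.sum_cons,
    List.sum_nil, add_zero, Nat.cast_one]
  push_cast [hn] at hdvd
  obtain h | h : (4 : ℤ) ∣ c - l ∨ (4 : ℤ) ∣ c - l - 2 := by omega
  · rw [ind_centre_of_dvd_add hε hε' hlast (by omega), spinBelow_of_meets (x := (j - 1, c - 1)),
      spinBelow_of_not_meets (x := (j - 1, c + 1)), spinBelow_of_meets (x := (j, c + 1)),
      spinBelow_of_not_meets (x := (j, c - 1)), hz]
    · simp
    all_goals unfold SpinMeets; dsimp only; push_cast [hn]; omega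
  · rw [ind_centre_of_dvd_sub hε hε' hlast (by omega), spinBelow_of_not_meets (x := (j - 1, c - 1)),
      spinBelow_of_meets (x := (j - 1, c + 1)), spinBelow_of_not_meets (x := (j, c + 1)),
      spinBelow_of_meets (x := (j, c - 1)), hz]
    · simp
    all_goals unfold SpinMeets; dsimp only; push_cast [hn]; omega

theorem mon_eq_Lap_of_mem_pathsBspin (hn : 1 ≤ n) (hl : l % 2 = 1) (hε : 0 < ε) (hε' : ε < 1)
    (hp : p ∈ pathsBspin n ε l) : mon (.B n ε) p = Lap (.B n ε) (spinBelow n l p) := by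
  ext x
  by_cases hx : x ∈ XB n
  · obtain hxn | hxn : x.1 < n ∨ x.1 = n := by simp only [XB, Set.mem_ofPred_eq] at hx; omega
    · exact mon_apply_of_mem_pathsBspin hl hε hε' hp hx hxn
    · exact mon_apply_centre_of_mem_pathsBspin hn hl hε hε' hp hx hxn
  · rw [mon_apply_of_notMem hx, Lap_apply_of_notMem (S := .B n ε) hx]

theorem botPath_mem_pathsBspin (hε : |ε| ≤ 1) (hp : p ∈ pathsBspin n ε l)
    (hq : q ∈ pathsBspin n ε l) : botPath p q ∈ pathsBspin n ε l := by
  obtain ⟨hlen, hside, hcentre, h0, hstep, hlast⟩ := hp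
  obtain ⟨hlen', -, -, h0', hstep', hlast'⟩ := hq
  have hpq : p.length = q.length := hlen.trans hlen'.symm
  have hdiff : ∀ r ≤ n - 1, (pt p r).2 = (pt q r).2 ∨ 2 * 2 ≤ |(pt p r).2 - (pt q r).2| :=
    fun r => eq_or_le_abs_sub_of_steps (f := fun r => (pt p r).2) (g := fun r => (pt q r).2)
      zero_le_two (h0.trans h0'.symm) (fun r hr => hstep r (by omega))
      (fun r hr => hstep' r (by omega))
  refine ⟨by rw [length_botPath hpq, hlen], ?_, ?_, ?_, ?_, ?_⟩ <;> simp only [pt_botPath hpq]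
  · exact hside
  · exact hcentre
  · rw [h0, h0', max_self]
  · intro r hr
    exact max_step zero_le_two (hdiff r (by omega)) (hstep r hr) (hstep' r hr)
  · rw [abs_le] at hε
    refine max_step (by linarith) ((hdiff _ le_rfl).imp_right fun h => ?_) hlast hlast'
    linarith

end Spin

/-! ### Pairs of spin paths -/

section SpinPairs

variable {n i : ℕ} {ε : ℝ} {k l l' : ℤ} {x : ℕ × ℤ} {p q a b : List (ℝ × ℝ)}

theorem isTurn_append_reverse_iff {up : Bool} (hl : l % 2 = 1) (hl' : l' % 2 = 1)
    (ha : a ∈ pathsBspin n ε l) (hb : b ∈ pathsBspin n ε l') (hx : x ∈ XB n) (hxn : x.1 < n) :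
    IsTurn (a ++ b.reverse) up ((iotaB n x).1, (iotaB n x).2) ↔
      IsTurn a up ((iotaB n x).1, (iotaB n x).2) ∨ IsTurn b up ((iotaB n x).1, (iotaB n x).2) := by
  rw [isTurn_append_iff, isTurn_reverse_iff]
  · rw [ha.1]
    intro h
    exact hxn.ne' ((fst_eq_iota_iff hl ha le_rfl hx hxn).1 (congrArg Prod.fst h.symm)).1
  · rw [pt_reverse (by rw [hb.1]; omega), hb.1]
    intro h
    exact hxn.ne' ((fst_eq_iota_iff hl' hb le_rfl hx hxn).1 (congrArg Prod.fst h.symm)).1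

theorem mon_append_reverse (hl : l % 2 = 1) (hl' : l' % 2 = 1) (hll' : l % 4 ≠ l' % 4)
    (ha : a ∈ pathsBspin n ε l) (hb : b ∈ pathsBspin n ε l') (hab : (pt a n).2 ≠ (pt b n).2) :
    mon (.B n ε) (a ++ b.reverse) = mon (.B n ε) a + mon (.B n ε) b := by
  ext x
  rw [Pi.add_apply]
  by_cases hx : x ∈ XB n
  · obtain hxn | hxn : x.1 < n ∨ x.1 = n := by simp only [XB, Set.mem_ofPred_eq] at hx; omega
    · have hexcl : ∀ up, ¬(IsTurn a up ((iotaB n x).1, (iotaB n x).2) ∧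
          IsTurn b up ((iotaB n x).1, (iotaB n x).2)) := by
        rintro up ⟨hta, htb⟩
        have hda := dvd_of_isTurn hl ha hx hxn hta
        have hdb := dvd_of_isTurn hl' hb hx hxn htb
        omega
      rw [mon_apply_of_lt hx hxn, mon_apply_of_lt hx hxn, mon_apply_of_lt hx hxn,
        isTurn_append_reverse_iff hl hl' ha hb hx hxn,
        isTurn_append_reverse_iff hl hl' ha hb hx hxn,
        ind_or_of_not_and (hexcl _), ind_or_of_not_and (hexcl _)]
      ring
    · have hmem : ∀ v, ind ((2 * (n : ℝ) - 1, v) ∈ a ++ b.reverse) =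
          ind ((2 * (n : ℝ) - 1, v) ∈ a) + ind ((2 * (n : ℝ) - 1, v) ∈ b) := by
        intro v
        rw [List.mem_append, List.mem_reverse, ind_or_of_not_and]
        rw [mem_centre_iff_of_mem_pathsBspin hl ha, mem_centre_iff_of_mem_pathsBspin hl' hb]
        exact fun h => hab (h.1.trans h.2.symm)
      rw [mon_apply_centre hx hxn, mon_apply_centre hx hxn, mon_apply_centre hx hxn, hmem, hmem]
      ring
  · rw [mon_apply_of_notMem hx, mon_apply_of_notMem hx, mon_apply_of_notMem hx, add_zero]

theorem mem_pathsB_iff (hi : i ≠ n) :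
    p ∈ pathsB n ε i k ↔ ∃ a ∈ pathsBspin n ε (k - (2 * n - 2 * i - 1)),
      ∃ b ∈ pathsBspin n ε (k + (2 * n - 2 * i - 1)), p = a ++ b.reverse ∧
        (pt b n).2 < (pt a n).2 := by
  rw [pathsB, if_neg hi]
  constructor
  · rintro ⟨a, b, ha, hb, hp, -, hab⟩
    exact ⟨a, ha, b, hb, hp, sub_pos.1 hab⟩
  · rintro ⟨a, ha, b, hb, hp, hab⟩
    exact ⟨a, b, ha, hb, hp, ha.2.2.1.trans hb.2.2.1.symm, sub_pos.2 hab⟩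

theorem botPath_append_reverse {a' b' : List (ℝ × ℝ)} (ha : a.length = a'.length)
    (hb : b.length = b'.length) :
    botPath (a ++ b.reverse) (a' ++ b'.reverse) = botPath a a' ++ (botPath b b').reverse := by
  rw [botPath, botPath, botPath, List.zipWith_append ha, List.reverse_zipWith hb]

theorem botPath_mem_pathsB (hε : |ε| ≤ 1) (hp : p ∈ pathsB n ε i k) (hq : q ∈ pathsB n ε i k) :
    botPath p q ∈ pathsB n ε i k := by
  by_cases hi : i = n
  · rw [pathsB, if_pos hi] at *
    exact botPath_mem_pathsBspin hε hp hq
  · rw [mem_pathsB_iff hi] at *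
    obtain ⟨a, ha, b, hb, rfl, hab⟩ := hp
    obtain ⟨a', ha', b', hb', rfl, hab'⟩ := hq
    have hla : a.length = a'.length := ha.1.trans ha'.1.symm
    have hlb : b.length = b'.length := hb.1.trans hb'.1.symm
    refine ⟨_, botPath_mem_pathsBspin hε ha ha', _, botPath_mem_pathsBspin hε hb hb',
      botPath_append_reverse hla hlb, ?_⟩
    rw [pt_botPath hla, pt_botPath hlb]
    exact max_lt_max hab hab'

end SpinPairs

/-! ### Paths and gates -/

section Below

/-- The index of the point of a path of `P S w.1 w.2` that `A_x` can move, or `none` if it never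
moves one. In type B, for `w.1 ≠ n`, this is point number `x.1` of `a` or of `b` in a path
`a ++ b.reverse`. -/
noncomputable def crossIndex : Setting → ℕ × ℤ → ℕ × ℤ → Option ℕ
  | .A _, _, x => some x.1
  | .B n _, w, x => open Classical in
      if w.1 = n then if SpinMeets n w.2 x then some x.1 else none
      else if SpinMeets n (w.2 - (2 * n - 2 * w.1 - 1)) x then some x.1 else some (2 * n + 1 - x.1)

/-- The abscissa of the gate `x`, used to compare the paths of a tuple near `x`. -/
def gateColumn : Setting → ℕ × ℤ → ℤ
  | .A _, x => x.1
  | .B n _, x => (iotaB n (x.1, x.2 - 2)).1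

/-- The path `p`, an element of `P S w.1 w.2`, passes strictly below the gate `x`. The test concerns
only the point of `p` that `A_x` can move. -/
def PassesBelow (S : Setting) (w : ℕ × ℤ) (p : List (ℝ × ℝ)) (x : ℕ × ℤ) : Prop :=
  ∃ r ∈ crossIndex S w x, (x.2 : ℝ) < (pt p r).2

variable {S : Setting} {n : ℕ} {ε : ℝ} {w x : ℕ × ℤ} {p q a b : List (ℝ × ℝ)}

theorem ind_passesBelow_eq_spinBelow (hw : w.1 = n) :
    ind (PassesBelow (.B n ε) w p x) = spinBelow n w.2 p x := by
  rw [PassesBelow, spinBelow, crossIndex, if_pos hw]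
  split_ifs with h <;> simp [h]

theorem ind_passesBelow_append_reverse (hw : w.1 ≠ n) (hx : x ∈ gates (.B n ε)) (hwx : w.2 % 2 = 0)
    (ha : a.length = n + 1) (hb : b.length = n + 1) :
    ind (PassesBelow (.B n ε) w (a ++ b.reverse) x) =
      spinBelow n (w.2 - (2 * n - 2 * w.1 - 1)) a x +
        spinBelow n (w.2 + (2 * n - 2 * w.1 - 1)) b x := by
  obtain ⟨hxn, hx2⟩ : x.1 ≤ n ∧ x.2 % 2 = 0 := hx
  rw [PassesBelow, crossIndex, if_neg hw]
  split_ifs with h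
  · rw [spinBelow_of_meets h, spinBelow_of_not_meets (l := w.2 + _)]
    · simp [pt_append_left (q := b.reverse) (p := a) (r := x.1) (by omega)]
    · simp only [SpinMeets] at *
      omega
  · rw [spinBelow_of_not_meets h, spinBelow_of_meets (l := w.2 + _)]
    · have hr : 2 * n + 1 - x.1 = a.length + (n - x.1) := by omega
      have hlt : n - x.1 < b.length := by omega
      have hidx : b.length - 1 - (n - x.1) = x.1 := by omega
      simp [hr, pt_append_add, pt_reverse hlt, hidx]
    · simp only [SpinMeets] at *
      omega

theorem mon_eq_Lap_ind_passesBelow (hS : S.valid) (hw : w ∈ X S) (hp : p ∈ P S w.1 w.2) :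
    mon S p = Lap S fun x => ind (PassesBelow S w p x) := by
  cases S with
  | A n =>
    rw [mon_eq_Lap_of_mem_pathsA hw hp]
    congr 1
    ext x
    simp [PassesBelow, crossIndex]
  | B n ε =>
    obtain ⟨hn, hε, hε'⟩ := hS
    have hpB : p ∈ pathsB n ε w.1 w.2 := hp
    obtain ⟨hwn, hw2⟩ | ⟨-, hwn, hw2⟩ := hw
    · rw [pathsB, if_pos hwn] at hpB
      rw [mon_eq_Lap_of_mem_pathsBspin (by omega) hw2 hε (by linarith) hpB]
      exact congrArg _ (funext fun x => (ind_passesBelow_eq_spinBelow hwn).symm)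
    · obtain ⟨a, ha, b, hb, rfl, hab⟩ := (mem_pathsB_iff hwn.ne).1 hpB
      rw [mon_append_reverse (by omega) (by omega) (by omega) ha hb hab.ne',
        mon_eq_Lap_of_mem_pathsBspin (by omega) (by omega) hε (by linarith) ha,
        mon_eq_Lap_of_mem_pathsBspin (by omega) (by omega) hε (by linarith) hb, ← map_add]
      exact Lap_congr fun x hx =>
        (ind_passesBelow_append_reverse hwn.ne hx hw2 ha.1 hb.1).symm

theorem pt_of_mem_crossIndex (hw : w ∈ X S) (hp : p ∈ P S w.1 w.2) (hx : x ∈ gates S) {r : ℕ}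
    (hr : r ∈ crossIndex S w x) : r < p.length ∧ (pt p r).1 = gateColumn S x := by
  cases S with
  | A n =>
    obtain rfl : x.1 = r := Option.some_inj.1 hr
    exact ⟨by rw [hp.1]; exact Nat.lt_succ_of_le hx.1, hp.2.1 _ (Nat.lt_succ_of_le hx.1)⟩
  | B n ε =>
    have hpB : p ∈ pathsB n ε w.1 w.2 := hp
    obtain ⟨hxn, hx2⟩ : x.1 ≤ n ∧ x.2 % 2 = 0 := hx
    obtain ⟨hwn, hw2⟩ | ⟨hw1, hwn, hw2⟩ := hw
    · rw [pathsB, if_pos hwn] at hpB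
      rw [crossIndex, if_pos hwn] at hr
      split_ifs at hr with hmeets
      · obtain rfl : x.1 = r := Option.some_inj.1 hr
        exact ⟨by rw [hpB.1]; omega, fst_of_mem_pathsBspin hw2 hpB hxn (by grind [SpinMeets])⟩
      · cases hr
    · obtain ⟨a, ha, b, hb, rfl, -⟩ := (mem_pathsB_iff hwn.ne).1 hpB
      have hla := ha.1
      have hlb := hb.1
      rw [crossIndex, if_neg hwn.ne] at hr
      rw [List.length_append, List.length_reverse]
      split_ifs at hr with hmeets <;> unfold SpinMeets at hmeets <;>
        obtain rfl := Option.some_inj.1 hr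
      · rw [pt_append_left (by omega)]
        exact ⟨by omega, fst_of_mem_pathsBspin (by omega) ha hxn (by omega)⟩
      · rw [show 2 * n + 1 - x.1 = a.length + (n - x.1) by omega, pt_append_add,
          pt_reverse (by omega), show b.length - 1 - (n - x.1) = x.1 by omega]
        exact ⟨by omega, fst_of_mem_pathsBspin (by omega) hb hxn (by omega)⟩

theorem map_fst_eq_of_mem_pathsBspin {l : ℤ} (hp : p ∈ pathsBspin n ε l)
    (hq : q ∈ pathsBspin n ε l) : p.map Prod.fst = q.map Prod.fst := by
  obtain ⟨hlen, hside, hcentre, -⟩ := hp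
  obtain ⟨hlen', hside', hcentre', -⟩ := hq
  refine map_fst_eq_of_pt (hlen.trans hlen'.symm) fun r hr => ?_
  rw [hlen] at hr
  rcases (Nat.lt_succ_iff.1 hr).eq_or_lt with rfl | hr
  · rw [hcentre, hcentre']
  · split_ifs at hside hside' <;> rw [hside r hr, hside' r hr]

theorem map_fst_eq_of_mem_P {i : ℕ} {k : ℤ} (hp : p ∈ P S i k) (hq : q ∈ P S i k) :
    p.map Prod.fst = q.map Prod.fst := by
  cases S with
  | A n =>
    exact map_fst_eq_of_pt (hp.1.trans hq.1.symm) fun r hr =>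
      (hp.2.1 r (hp.1 ▸ hr)).trans (hq.2.1 r (hp.1 ▸ hr)).symm
  | B n ε =>
    have hpB : p ∈ pathsB n ε i k := hp
    have hqB : q ∈ pathsB n ε i k := hq
    by_cases hi : i = n
    · rw [pathsB, if_pos hi] at hpB hqB
      exact map_fst_eq_of_mem_pathsBspin hpB hqB
    · obtain ⟨a, ha, b, hb, rfl, -⟩ := (mem_pathsB_iff hi).1 hpB
      obtain ⟨a', ha', b', hb', rfl, -⟩ := (mem_pathsB_iff hi).1 hqB
      rw [List.map_append, List.map_append, List.map_reverse, List.map_reverse,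
        map_fst_eq_of_mem_pathsBspin ha ha', map_fst_eq_of_mem_pathsBspin hb hb']

theorem length_eq_of_mem_P {i : ℕ} {k : ℤ} (hp : p ∈ P S i k) (hq : q ∈ P S i k) :
    p.length = q.length := by
  simpa using congrArg List.length (map_fst_eq_of_mem_P hp hq)

theorem botPath_mem_P (hS : S.valid) {i : ℕ} {k : ℤ} (hp : p ∈ P S i k) (hq : q ∈ P S i k) :
    botPath p q ∈ P S i k := by
  cases S with
  | A n => exact botPath_mem_pathsA hp hq
  | B n ε => exact botPath_mem_pathsB (abs_le.2 ⟨by linarith [hS.2.1], by linarith [hS.2.2]⟩) hp hq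

theorem PassesBelow.isSome_crossIndex (h : PassesBelow S w p x) : (crossIndex S w x).isSome :=
  let ⟨_, hr, _⟩ := h
  Option.isSome_of_mem hr

theorem PassesBelow.trans_strictlyAbove {w' : ℕ × ℤ} (hw : w ∈ X S) (hw' : w' ∈ X S)
    (hp : p ∈ P S w.1 w.2) (hq : q ∈ P S w'.1 w'.2) (hx : x ∈ gates S)
    (h : PassesBelow S w p x) (hpq : StrictlyAbove p q) (hcross : (crossIndex S w' x).isSome) :
    PassesBelow S w' q x := by
  obtain ⟨r, hr, hlt⟩ := h
  obtain ⟨r', hr'⟩ := Option.isSome_iff_exists.1 hcross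
  obtain ⟨hrlen, hrcol⟩ := pt_of_mem_crossIndex hw hp hx hr
  obtain ⟨hrlen', hrcol'⟩ := pt_of_mem_crossIndex hw' hq hx hr'
  exact ⟨r', hr', hlt.trans (hpq _ (pt_mem hrlen) _ (pt_mem hrlen') (hrcol.trans hrcol'.symm))⟩

theorem passesBelow_botPath_iff (h : p.length = q.length) :
    PassesBelow S w (botPath p q) x ↔ PassesBelow S w p x ∨ PassesBelow S w q x := by
  simp only [PassesBelow, pt_botPath h, lt_max_iff, and_or_left, exists_or]

theorem passesBelow_iff_of_isBoundary (hp : p ∈ P S w.1 w.2) (hq : q ∈ P S w.1 w.2)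
    (hx : IsBoundary S x.1) : PassesBelow S w p x ↔ PassesBelow S w q x := by
  suffices ∀ r ∈ crossIndex S w x, (pt p r).2 = (pt q r).2 from
    exists_congr fun r => and_congr_right fun hr => by rw [this r hr]
  intro r hr
  cases S with
  | A n =>
    obtain rfl : x.1 = r := Option.some_inj.1 hr
    obtain hx | hx : x.1 = 0 ∨ x.1 = n + 1 := hx
    · rw [hx, hp.2.2.1, hq.2.2.1]
    · rw [hx, hp.2.2.2.1, hq.2.2.2.1]
  | B n ε =>
    have hpB : p ∈ pathsB n ε w.1 w.2 := hp
    have hqB : q ∈ pathsB n ε w.1 w.2 := hq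
    have hx : x.1 = 0 := hx
    by_cases hwn : w.1 = n
    · rw [pathsB, if_pos hwn] at hpB hqB
      rw [crossIndex, if_pos hwn, hx] at hr
      split_ifs at hr
      · obtain rfl := Option.some_inj.1 hr
        rw [hpB.2.2.2.1, hqB.2.2.2.1]
      · cases hr
    · obtain ⟨a, ha, b, hb, rfl, -⟩ := (mem_pathsB_iff hwn).1 hpB
      obtain ⟨a', ha', b', hb', rfl, -⟩ := (mem_pathsB_iff hwn).1 hqB
      rw [crossIndex, if_neg hwn, hx] at hr
      split_ifs at hr <;> obtain rfl := Option.some_inj.1 hr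
      · rw [pt_append_left (by simp [ha.1]), pt_append_left (by simp [ha'.1]), ha.2.2.2.1,
          ha'.2.2.2.1]
      · have hlast (c d : List (ℝ × ℝ)) (hc : c.length = n + 1) (hd : d.length = n + 1) :
            pt (c ++ d.reverse) (2 * n + 1 - 0) = pt d 0 := by
          rw [show 2 * n + 1 - 0 = c.length + n by omega, pt_append_add, pt_reverse (by omega), hd,
            Nat.add_sub_cancel, Nat.sub_self]
        rw [hlast a b ha.1 hb.1, hlast a' b' ha'.1 hb'.1, hb.2.2.2.1, hb'.2.2.2.1]

theorem eventually_passesBelow_iff (hw : w ∈ X S) (hp : p ∈ P S w.1 w.2) :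
    ∀ᶠ L : ℤ in Filter.atBot, ∀ x ∈ gates S, x.2 ≤ L →
      (PassesBelow S w p x ↔ (crossIndex S w x).isSome) := by
  have hlt : ∀ᶠ L : ℤ in Filter.atBot, ∀ a ∈ p, (L : ℝ) < a.2 :=
    (Filter.eventually_all_finite p.finite_toSet).2 fun a _ =>
      (tendsto_intCast_atBot_iff.2 Filter.tendsto_id).eventually_lt_atBot a.2
  filter_upwards [hlt] with L hL x hx hxL
  refine ⟨PassesBelow.isSome_crossIndex, fun h => ?_⟩
  obtain ⟨r, hr⟩ := Option.isSome_iff_exists.1 h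
  have hxL' : (x.2 : ℝ) ≤ L := by exact_mod_cast hxL
  exact ⟨r, hr, hxL'.trans_lt (hL _ (pt_mem (pt_of_mem_crossIndex hw hp hx hr).1))⟩

end Below

/-! ### Height functions of tuples -/

theorem forall_imp_or_forall_imp_of_chain {ι : Type*} [LinearOrder ι] {Q G G' : ι → Prop}
    (hGQ : ∀ t, G t → Q t) (hGQ' : ∀ t, G' t → Q t)
    (hG : ∀ s t, s < t → G s → Q t → G t) (hG' : ∀ s t, s < t → G' s → Q t → G' t) :
    (∀ t, G t → G' t) ∨ ∀ t, G' t → G t := by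
  by_contra! ⟨⟨s, hs, hs'⟩, t, ht', ht⟩
  rcases lt_trichotomy s t with hst | rfl | hts
  · exact ht (hG s t hst hs (hGQ' t ht'))
  · exact ht hs
  · exact hs' (hG' t s hts ht' (hGQ s hs))

theorem sum_ind_or_of_forall_imp {ι : Type*} [Fintype ι] {G G' : ι → Prop}
    (h : (∀ t, G t → G' t) ∨ ∀ t, G' t → G t) :
    ∑ t, ind (G t ∨ G' t) = max (∑ t, ind (G t)) (∑ t, ind (G' t)) := by
  rcases h with h | h
  · rw [max_eq_right (Finset.sum_le_sum fun t _ => ind_mono (h t))]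
    exact Finset.sum_congr rfl fun t _ => ind_congr (or_iff_right_of_imp (h t))
  · rw [max_eq_left (Finset.sum_le_sum fun t _ => ind_mono (h t))]
    exact Finset.sum_congr rfl fun t _ => ind_congr (or_iff_left_of_imp (h t))

section Height

/-- The height function of a tuple of paths: the number of its components that pass strictly below
the gate `x`. -/
noncomputable def height (S : Setting) {T : ℕ} (w : Fin T → ℕ × ℤ) (ps : Fin T → List (ℝ × ℝ))
    (x : ℕ × ℤ) : ℤ :=
  ∑ t, ind (PassesBelow S (w t) (ps t) x)

variable {S : Setting} {T : ℕ} {w : Fin T → ℕ × ℤ} {ps ps' : Fin T → List (ℝ × ℝ)} {x : ℕ × ℤ}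

theorem tmon_eq_Lap_height (hS : S.valid) (hw : ∀ t, w t ∈ X S) (hps : ps ∈ PBar S w) :
    tmon S ps = Lap S (height S w ps) := by
  have hsum : height S w ps = ∑ t, fun x => ind (PassesBelow S (w t) (ps t) x) := by
    ext x
    rw [height, Finset.sum_apply]
  rw [hsum, map_sum, tmon]
  exact Finset.sum_congr rfl fun t _ => mon_eq_Lap_ind_passesBelow hS (hw t) (hps.1 t)

theorem botPath_mem_PBar (hS : S.valid) (hps : ps ∈ PBar S w) (hps' : ps' ∈ PBar S w) :
    (fun t => botPath (ps t) (ps' t)) ∈ PBar S w :=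
  ⟨fun t => botPath_mem_P hS (hps.1 t) (hps'.1 t), fun s t hst =>
    (hps.2 s t hst).botPath (map_fst_eq_of_mem_P (hps.1 s) (hps'.1 s))
      (map_fst_eq_of_mem_P (hps.1 t) (hps'.1 t)) (hps'.2 s t hst)⟩

-- The components passing below `x` form a final segment of those that `A_x` can move, and two final
-- segments of the same chain are nested.
theorem height_botPath (hw : ∀ t, w t ∈ X S) (hps : ps ∈ PBar S w) (hps' : ps' ∈ PBar S w)
    (hx : x ∈ gates S) :
    height S w (fun t => botPath (ps t) (ps' t)) x = max (height S w ps x) (height S w ps' x) := by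
  have hchain {qs : Fin T → List (ℝ × ℝ)} (hqs : qs ∈ PBar S w) (s t : Fin T) (hst : s < t)
      (hs : PassesBelow S (w s) (qs s) x) (ht : (crossIndex S (w t) x).isSome) :
      PassesBelow S (w t) (qs t) x :=
    hs.trans_strictlyAbove (hw s) (hw t) (hqs.1 s) (hqs.1 t) hx (hqs.2 s t hst) ht
  have hbot (t : Fin T) := passesBelow_botPath_iff (S := S) (w := w t) (x := x)
    (length_eq_of_mem_P (hps.1 t) (hps'.1 t))
  simp only [height, hbot]
  exact sum_ind_or_of_forall_imp (forall_imp_or_forall_imp_of_chain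
    (fun _ => PassesBelow.isSome_crossIndex) (fun _ => PassesBelow.isSome_crossIndex)
    (hchain hps) (hchain hps'))

theorem height_eq_of_isBoundary (hps : ps ∈ PBar S w) (hps' : ps' ∈ PBar S w)
    (hx : IsBoundary S x.1) : height S w ps x = height S w ps' x :=
  Finset.sum_congr rfl fun t _ =>
    ind_congr (passesBelow_iff_of_isBoundary (hps.1 t) (hps'.1 t) hx)

theorem eventually_height_eq (hw : ∀ t, w t ∈ X S) (hps : ps ∈ PBar S w) (hps' : ps' ∈ PBar S w) :
    ∀ᶠ L : ℤ in Filter.atBot, ∀ x ∈ gates S, x.2 ≤ L → height S w ps x = height S w ps' x := by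
  have hev {qs : Fin T → List (ℝ × ℝ)} (hqs : qs ∈ PBar S w) :=
    Filter.eventually_all.2 fun t => eventually_passesBelow_iff (hw t) (hqs.1 t)
  filter_upwards [hev hps, hev hps'] with L hL hL' x hx hxL
  exact Finset.sum_congr rfl fun t _ =>
    ind_congr <| (hL t x hx hxL).trans (hL' t x hx hxL).symm

variable {D : ℕ × ℤ → ℤ}

theorem height_eq_add_of_tmon_eq (hS : S.valid) (hw : ∀ t, w t ∈ X S) (hps : ps ∈ PBar S w)
    (hps' : ps' ∈ PBar S w) (hb : ∀ x ∈ gates S, IsBoundary S x.1 → D x = 0)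
    (hfar : ∀ᶠ L : ℤ in Filter.atBot, ∀ x ∈ gates S, x.2 ≤ L → D x = 0)
    (h : tmon S ps' = tmon S ps + Lap S D) :
    Set.EqOn (height S w ps') (height S w ps + D) (gates S) := by
  obtain ⟨L, hD, hheight⟩ := (hfar.and (eventually_height_eq hw hps hps')).exists
  have hLap : Lap S (height S w ps' - (height S w ps + D)) = 0 := by
    rw [map_sub, map_add, ← tmon_eq_Lap_height hS hw hps, ← tmon_eq_Lap_height hS hw hps', h,
      sub_self]
  have hzero := eqOn_zero_of_Lap_eq_zero (L := L) hS hLap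
    (fun x hx hxb => by simp [hb x hx hxb, height_eq_of_isBoundary hps hps' hxb])
    fun x hx hxL => by simp [hD x hx hxL, hheight x hx hxL]
  exact fun x hx => sub_eq_zero.1 (hzero hx)

theorem exists_tmon_eq_add_Lap_posPart (hS : S.valid) (hw : ∀ t, w t ∈ X S) (hps : ps ∈ PBar S w)
    (hps' : ps' ∈ PBar S w) (hb : ∀ x ∈ gates S, IsBoundary S x.1 → D x = 0)
    (hfar : ∀ᶠ L : ℤ in Filter.atBot, ∀ x ∈ gates S, x.2 ≤ L → D x = 0)
    (h : tmon S ps' = tmon S ps + Lap S D) :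
    ∃ qs ∈ PBar S w, tmon S qs = tmon S ps + Lap S D⁺ := by
  have hqs := botPath_mem_PBar hS hps hps'
  refine ⟨_, hqs, ?_⟩
  rw [tmon_eq_Lap_height hS hw hqs, tmon_eq_Lap_height hS hw hps, ← map_add]
  refine Lap_congr fun x hx => ?_
  rw [height_botPath hw hps hps' hx, height_eq_add_of_tmon_eq hS hw hps hps' hb hfar h hx,
    Pi.add_apply, Pi.add_apply, Pi.posPart_apply, posPart_def, max_comm, ← max_add_add_left,
    add_zero]

end Height

theorem Y_apply_of_ne {x y : ℕ × ℤ} (h : x ≠ y) : Y y x = 0 := if_neg h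

theorem posPart_Y_sub_Y {x y : ℕ × ℤ} (h : x ≠ y) : (Y x - Y y)⁺ = Y x := by
  ext z
  rw [Pi.posPart_apply, Pi.sub_apply]
  by_cases hz : z = x
  · rw [hz, Y_apply_of_ne h, sub_zero, Y, if_pos rfl]
    rfl
  · rw [Y_apply_of_ne hz, zero_sub, posPart_eq_zero, neg_nonpos, Y]
    split_ifs <;> decide

theorem stmt12_general (S : Setting) (hS : S.valid) {T : ℕ} (w : Fin T → ℕ × ℤ)
    (hw : ∀ t, w t ∈ X S) (ps : Fin T → List (ℝ × ℝ)) (hps : ps ∈ PBar S w)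
    (i : ℕ) (k : ℤ) (hik : (i, k) ∈ W S)
    (h : ∀ ps' ∈ PBar S w, tmon S ps' ≠ tmon S ps - Amon S i k) :
    ∀ j : ℕ, ∀ l : ℤ, (j, l) ∈ W S → (j, l) ≠ (i, k) →
      ∀ ps' ∈ PBar S w, tmon S ps' ≠ tmon S ps - Amon S i k + Amon S j l := by
  intro j l hjl hne ps' hps' heq
  have hb : ∀ x ∈ gates S, IsBoundary S x.1 → (Y (i, k) - Y (j, l)) x = 0 := by
    intro x _ hx
    have hxW : x ∉ W S := fun hxW => not_isBoundary_of_mem_W hS hxW hx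
    rw [Pi.sub_apply, Y_apply_of_ne (ne_of_mem_of_not_mem hik hxW).symm,
      Y_apply_of_ne (ne_of_mem_of_not_mem hjl hxW).symm, sub_self]
  have hfar : ∀ᶠ L : ℤ in Filter.atBot, ∀ x ∈ gates S, x.2 ≤ L → (Y (i, k) - Y (j, l)) x = 0 := by
    filter_upwards [Filter.eventually_lt_atBot k, Filter.eventually_lt_atBot l] with L hk hl x _ hx
    rw [Pi.sub_apply, Y_apply_of_ne fun hxk => hk.not_ge (by rwa [hxk] at hx),
      Y_apply_of_ne fun hxl => hl.not_ge (by rwa [hxl] at hx), sub_self]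
  have hLap : tmon S ps' = tmon S ps + Lap S (Y (i, k) - Y (j, l)) := by
    rw [heq, map_sub, Lap_Y hS hik, Lap_Y hS hjl]
    abel
  obtain ⟨qs, hqs, hqs'⟩ := exists_tmon_eq_add_Lap_posPart hS hw hps hps' hb hfar hLap
  rw [posPart_Y_sub_Y hne.symm, Lap_Y hS hik, ← sub_eq_add_neg] at hqs'
  exact h qs hqs hqs'

/-- with `m = ∏ m(p_t)` for `(p_t) ∈ 𝒫̄` and `(i,k) ∈ W`: if `m A_{i,k}⁻¹` is
not of the form `∏ m(p'_t)` for any `(p'_t) ∈ 𝒫̄`, then neither is `m A_{i,k}⁻¹ A_{j,ℓ}` for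
any `(j,ℓ) ∈ W` with `(j,ℓ) ≠ (i,k)`. -/
theorem stmt12 (S : Setting) (hS : S.valid) {T : ℕ} (hT : 1 ≤ T)
    (w : Fin T → ℕ × ℤ) (hw : IsSnake S w)
    (ps : Fin T → List (ℝ × ℝ)) (hps : ps ∈ PBar S w)
    (i : ℕ) (k : ℤ) (hik : (i, k) ∈ W S)
    (h : ∀ ps' ∈ PBar S w, tmon S ps' ≠ tmon S ps - Amon S i k) :
    ∀ j : ℕ, ∀ l : ℤ, (j, l) ∈ W S → (j, l) ≠ (i, k) →
      ∀ ps' ∈ PBar S w, tmon S ps' ≠ tmon S ps - Amon S i k + Amon S j l :=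
  stmt12_general S hS w hw.1 ps hps i k hik h

end Paper
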